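/- For every strong solution u of the abstract damped wave equation with initial data u(0) = u₀ ∈ D(A), u'(0) = u₁ ∈ H, and every solution v of the associated abstract heat equation with v(0) = B^{1/2}u₀ + B^{-1/2}u₁, one has t·‖u(t) − B^{-1/2}v(t)‖ → 0 as t → ∞. -/

import Mathlib

open scoped ComplexInnerProductSpace

/-- A strong solution of the abstract damped wave equation `u'' + Au + Bu' = 0` on `[0,∞)`. -/
structure DampedWaveSolution
    {H : Type*} [NormedAddCommGroup H] [InnerProductSpace ℂ H] [CompleteSpace H]
    (A : H →ₗ.[ℂ] H) (B : H →L[ℂ] H) where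
  u : ℝ → H
  du : ℝ → H
  ddu : ℝ → H
  Au : ℝ → H
  mem : ∀ t : ℝ, 0 ≤ t → u t ∈ A.domain
  hAu : ∀ (t : ℝ) (ht : 0 ≤ t), A ⟨u t, mem t ht⟩ = Au t
  hdu : ∀ t : ℝ, 0 ≤ t → HasDerivWithinAt u (du t) (Set.Ici 0) t
  hddu : ∀ t : ℝ, 0 ≤ t → HasDerivWithinAt du (ddu t) (Set.Ici 0) t
  cont_ddu : ContinuousOn ddu (Set.Ici 0)
  cont_Au : ContinuousOn Au (Set.Ici 0)
  eqn : ∀ t : ℝ, 0 ≤ t → ddu t + Au t + B (du t) = 0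

/-- A solution of the associated abstract heat equation
`v' + B^{-1/2} A B^{-1/2} v = 0` on `[0,∞)`, where `Binvh` stands for `B^{-1/2}`. -/
structure HeatSolution
    {H : Type*} [NormedAddCommGroup H] [InnerProductSpace ℂ H] [CompleteSpace H]
    (A : H →ₗ.[ℂ] H) (Binvh : H →L[ℂ] H) where
  v : ℝ → H
  dv : ℝ → H
  mem : ∀ t : ℝ, 0 ≤ t → Binvh (v t) ∈ A.domain
  hdv : ∀ t : ℝ, 0 ≤ t → HasDerivWithinAt v (dv t) (Set.Ici 0) t
  cont_dv : ContinuousOn dv (Set.Ici 0)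
  eqn : ∀ (t : ℝ) (ht : 0 ≤ t), dv t + Binvh (A ⟨Binvh (v t), mem t ht⟩) = 0

open Filter Topology Set MeasureTheory
open scoped InnerProductSpace

/-!
Write `f = B^{-1/2} v`, which solves `B f' + A f = 0`, and read the wave equation as the heat
equation `B u' + A u = -u''`. Then `e = u - f` solves `B e' + A e = -u''`. The initial value of `v`
is the one for which the primitive `E₁` of `e` solves `B E₁' + A E₁ = -u'`, and the primitive `E₂`
of `E₁` then solves `B E₂' + A E₂ = u(0) - u`.

Energy estimates for the wave give `∫ t ‖u'‖² < ∞` and, applied to difference quotients of `u`,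
`∫ t³ ‖u''‖² < ∞`. On the parabolic side, a convergent forcing makes the derivative of a solution
tend to `0`: if the limit of the forcing is `A p`, subtract the stationary solution `p`; the general
case follows because the range of `A` is dense. Applied to the primitive of `u` this gives `u → 0`,
and applied to `E₂` it gives `E₁ → 0`. Parabolic smoothing gains one power of `t`, so that
`E₁ → 0` improves to `t ‖e‖ → 0`.
-/

/-! ### Integral inequalities on a half-line -/

section HalfLine

lemma eventually_le_mul_pow_of_hasDerivAt_le {Φ Φ' j : ℝ → ℝ} {κ : ℝ} {m : ℕ} (hκ : 0 < κ)
    (hj : IntegrableAtFilter j atTop) (hj0 : ∀ᶠ t in atTop, 0 ≤ j t)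
    (hΦ : ∀ᶠ t in atTop, HasDerivAt Φ (Φ' t) t)
    (hle : ∀ᶠ t in atTop, Φ' t ≤ t ^ (m + 1) * j t + κ * t ^ m) :
    ∀ᶠ t in atTop, Φ t ≤ 3 * κ * t ^ (m + 1) := by
  obtain ⟨a, ha⟩ := integrableAtFilter_atTop_iff.1 hj
  have htail : ∀ᶠ T in atTop, ∫ s in Ioi T, j s < κ :=
    (tendsto_integral_Ioi_zero tendsto_id).eventually_lt_const hκ
  obtain ⟨T, hT⟩ := eventually_atTop.1
    ((hj0.and (hΦ.and hle)).and (htail.and ((eventually_ge_atTop a).and (eventually_ge_atTop 0))))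
  have hjT : IntegrableOn j (Ici T) := ha.mono_set (Ici_subset_Ici.2 (hT T le_rfl).2.2.1)
  have hT0 : 0 ≤ T := (hT T le_rfl).2.2.2
  have hΦT : ∀ᶠ t in atTop, Φ T ≤ κ * t ^ (m + 1) :=
    ((tendsto_pow_atTop m.succ_ne_zero).const_mul_atTop hκ).eventually_ge_atTop _
  filter_upwards [hΦT, eventually_ge_atTop T] with t hΦT hTt
  have hjt : IntegrableOn j (Icc T t) := hjT.mono_set Icc_subset_Ici_self
  have hjt' : IntervalIntegrable j volume T t :=
    (intervalIntegrable_iff_integrableOn_Icc_of_le hTt).2 hjt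
  have hint : ∫ s in T..t, j s ≤ κ := by
    rw [intervalIntegral.integral_of_le hTt]
    refine (setIntegral_mono_set (hjT.mono_set Ioi_subset_Ici_self) ?_
      Ioc_subset_Ioi_self.eventuallyLE).trans (hT T le_rfl).2.1.le
    exact ae_restrict_of_forall_mem measurableSet_Ioi fun s hs => (hT s (le_of_lt hs)).1.1
  have hgrow := intervalIntegral.sub_le_integral_of_hasDeriv_right_of_le hTt
    (φ := fun s => t ^ (m + 1) * j s + κ * t ^ m)
    (fun s hs => (hT s hs.1).1.2.1.continuousAt.continuousWithinAt)
    (fun s hs => (hT s hs.1.le).1.2.1.hasDerivWithinAt)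
    ((hjt.const_mul _).add (integrableOn_const (by simp)))
    fun s hs => (hT s hs.1.le).1.2.2.trans <| by
      have hjs := (hT s hs.1.le).1.1
      have hs0 : 0 ≤ s := hT0.trans hs.1.le
      have hst : s ≤ t := hs.2.le
      gcongr
  rw [intervalIntegral.integral_add (hjt'.const_mul _) intervalIntegrable_const,
    intervalIntegral.integral_const_mul, intervalIntegral.integral_const, smul_eq_mul] at hgrow
  have ht0 : 0 ≤ t := hT0.trans hTt
  calc Φ t ≤ Φ T + t ^ (m + 1) * (∫ s in T..t, j s) + (t - T) * (κ * t ^ m) := by linarith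
    _ ≤ κ * t ^ (m + 1) + t ^ (m + 1) * κ + t * (κ * t ^ m) := by gcongr; linarith
    _ = 3 * κ * t ^ (m + 1) := by ring

lemma integrableAtFilter_atTop_of_intervalIntegral_le {j : ℝ → ℝ} {C : ℝ}
    (hj : ContinuousOn j (Ici 0)) (hj0 : ∀ᶠ t in atTop, 0 ≤ j t)
    (hC : ∀ᶠ t in atTop, ∫ s in (0 : ℝ)..t, j s ≤ C) : IntegrableAtFilter j atTop := by
  obtain ⟨T, hT⟩ := eventually_atTop.1 (hj0.and (eventually_ge_atTop 0))
  have hT0 : 0 ≤ T := (hT T le_rfl).2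
  refine ⟨Ioi T, Ioi_mem_atTop T, integrableOn_Ioi_of_intervalIntegral_norm_bounded (b := id)
    (C - ∫ s in (0 : ℝ)..T, j s) T (fun t => ?_) tendsto_id ?_⟩
  · exact ((hj.mono fun s hs => hT0.trans hs.1).integrableOn_Icc (b := t)).mono_set
      Ioc_subset_Icc_self
  · filter_upwards [hC, eventually_ge_atTop T] with t hCt hTt
    have hint : ∀ a b : ℝ, 0 ≤ a → a ≤ b → IntervalIntegrable j volume a b := fun a b h0 hab =>
      (hj.mono (by rw [uIcc_of_le hab]; exact fun s hs => h0.trans hs.1)).intervalIntegrable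
    have hnorm : ∫ s in T..t, ‖j s‖ = ∫ s in T..t, j s := by
      refine intervalIntegral.integral_congr fun s hs => ?_
      rw [uIcc_of_le hTt] at hs
      exact Real.norm_of_nonneg (hT s hs.1).1
    have hsplit := intervalIntegral.integral_add_adjacent_intervals (hint 0 T le_rfl hT0)
      (hint T t hT0 hTt)
    simp only [id]
    linarith

lemma integrableAtFilter_atTop_of_le {f g : ℝ → ℝ} (hf : ContinuousOn f (Ici 0))
    (hf0 : ∀ᶠ t in atTop, 0 ≤ f t) (hg : IntegrableAtFilter g atTop)
    (hle : ∀ᶠ t in atTop, f t ≤ g t) : IntegrableAtFilter f atTop := by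
  refine (Asymptotics.IsBigO.of_bound 1 ?_).integrableAtFilter
    ⟨Ici 0, Ici_mem_atTop 0, hf.aestronglyMeasurable measurableSet_Ici⟩ hg
  filter_upwards [hf0, hle] with t h0 h1
  rw [one_mul, Real.norm_of_nonneg h0]
  exact h1.trans (le_abs_self _)

lemma integral_le_sub_of_hasDerivAt_le_neg {F F' φ : ℝ → ℝ} {T : ℝ} (hT : 0 ≤ T)
    (hF : ContinuousOn F (Ici 0)) (hF' : ∀ t > 0, HasDerivAt F (F' t) t)
    (hφ : ContinuousOn φ (Ici 0)) (hle : ∀ t > 0, F' t ≤ -φ t) :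
    ∫ s in (0 : ℝ)..T, φ s ≤ F 0 - F T := by
  have h := intervalIntegral.integral_le_sub_of_hasDeriv_right_of_le (g := fun t => -F t) hT
    (hF.mono Icc_subset_Ici_self).neg (fun s hs => (hF' s hs.1).neg.hasDerivWithinAt)
    (hφ.mono Icc_subset_Ici_self).integrableOn_Icc fun s hs => le_neg_of_le_neg (hle s hs.1)
  linarith

end HalfLine

/-! ### Primitives and difference quotients -/

section Curves

variable {E : Type*} [NormedAddCommGroup E] [NormedSpace ℝ E] {f f' : ℝ → E}

/-- The forward difference quotient of step `h`; it commutes with every linear equation that is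
autonomous in `t`, and so differentiates such an equation without assuming extra regularity. -/
noncomputable def diffQuot (h : ℝ) (f : ℝ → E) (t : ℝ) : E := h⁻¹ • (f (t + h) - f t)

lemma continuousOn_diffQuot {h : ℝ} (hh : 0 < h) (hf : ContinuousOn f (Ici 0)) :
    ContinuousOn (diffQuot h f) (Ici 0) :=
  ((hf.comp (by fun_prop) fun _ ht => add_nonneg (mem_Ici.1 ht) hh.le).sub hf).const_smul _

lemma hasDerivAt_diffQuot {h : ℝ} (hh : 0 < h) (hf : ∀ t > 0, HasDerivAt f (f' t) t) {t : ℝ}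
    (ht : 0 < t) : HasDerivAt (diffQuot h f) (diffQuot h f' t) t :=
  (((hf (t + h) (add_pos ht hh)).comp_add_const t h).sub (hf t ht)).const_smul _

lemma norm_diffQuot_le {h t M : ℝ} (hh : 0 < h) (hf : ∀ s ∈ Icc t (t + h), HasDerivAt f (f' s) s)
    (hM : ∀ s ∈ Icc t (t + h), ‖f' s‖ ≤ M) : ‖diffQuot h f t‖ ≤ M := by
  have hmvt := (convex_Icc t (t + h)).norm_image_sub_le_of_norm_hasDerivWithin_le
    (fun s hs => (hf s hs).hasDerivWithinAt) hM (left_mem_Icc.2 (by linarith))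
    (right_mem_Icc.2 (by linarith))
  rw [diffQuot, norm_smul, norm_inv, Real.norm_of_nonneg hh.le, inv_mul_le_iff₀ hh, mul_comm]
  simpa only [add_sub_cancel_left, Real.norm_of_nonneg hh.le] using hmvt

lemma tendsto_integral_mul_norm_diffQuot_sq {ω : ℝ → ℝ} {T : ℝ} (hT : 0 ≤ T)
    (hf : ∀ t > 0, HasDerivAt f (f' t) t) (hf' : ContinuousOn f' (Ici 0)) (hω : Continuous ω) :
    Tendsto (fun h => ∫ s in (0 : ℝ)..T, ω s * ‖diffQuot h f s‖ ^ 2) (𝓝[>] 0)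
      (𝓝 (∫ s in (0 : ℝ)..T, ω s * ‖f' s‖ ^ 2)) := by
  obtain ⟨M, hM⟩ := (isCompact_Icc (a := (0 : ℝ)) (b := T + 1)).exists_bound_of_continuousOn
    (hf'.mono Icc_subset_Ici_self)
  refine intervalIntegral.tendsto_integral_filter_of_dominated_convergence (fun s => |ω s| * M ^ 2)
    ?_ ?_ (Continuous.intervalIntegrable (by fun_prop) _ _) ?_
  · filter_upwards [self_mem_nhdsWithin] with h hh
    rw [uIoc_of_le hT]
    refine ContinuousOn.aestronglyMeasurable (fun s hs => ?_) measurableSet_Ioc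
    exact (hω.continuousAt.mul
      ((hasDerivAt_diffQuot hh hf hs.1).continuousAt.norm.pow 2)).continuousWithinAt
  · filter_upwards [Ioo_mem_nhdsGT one_pos] with h hh
    refine Eventually.of_forall fun s hs => ?_
    rw [uIoc_of_le hT] at hs
    rw [norm_mul, norm_pow, norm_norm, Real.norm_eq_abs]
    gcongr
    exact norm_diffQuot_le hh.1 (fun r hr => hf r (hs.1.trans_le hr.1))
      fun r hr => hM r ⟨hs.1.le.trans hr.1, by linarith [hr.2, hs.2, hh.2]⟩
  · refine Eventually.of_forall fun s hs => ?_
    rw [uIoc_of_le hT] at hs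
    exact ((hf s hs.1).tendsto_slope_zero_right.norm.pow 2).const_mul _

lemma mem_of_hasDerivAt_mem {Γ : Submodule ℝ E} (hΓ : IsClosed (Γ : Set E))
    (hf : ContinuousOn f (Ici 0)) (hf' : ∀ t > 0, HasDerivAt f (f' t) t)
    (hmem : ∀ t > 0, f' t ∈ Γ) (h0 : f 0 ∈ Γ) {t : ℝ} (ht : 0 ≤ t) : f t ∈ Γ := by
  obtain rfl | ht := ht.eq_or_lt
  · exact h0
  by_contra hft
  obtain ⟨φ, r, hφΓ, hφt⟩ := geometric_hahn_banach_closed_point Γ.convex hΓ hft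
  obtain ⟨s, hs, hslope⟩ := exists_hasDerivAt_eq_slope (fun t => φ (f t)) (fun t => φ (f' t)) ht
    (φ.continuous.comp_continuousOn (hf.mono Icc_subset_Ici_self))
    fun s hs => φ.hasFDerivAt.comp_hasDerivAt s (hf' s hs.1)
  have heq : φ (f t) = φ (f 0 + t • f' s) := by
    rw [map_add, map_smul, smul_eq_mul, hslope, sub_zero, mul_div_cancel₀ _ ht.ne']
    ring
  exact (hφΓ _ (Γ.add_mem h0 (Γ.smul_mem t (hmem s hs.1)))).not_gt (heq ▸ hφt)

lemma exists_primitive [CompleteSpace E] (hf : ContinuousOn f (Ici 0)) :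
    ∃ F : ℝ → E, F 0 = 0 ∧ ContinuousOn F (Ici 0) ∧ ∀ t > 0, HasDerivAt F (f t) t := by
  have hcont : Continuous fun s => f (max s 0) :=
    hf.comp_continuous (by fun_prop) fun s => le_max_right s 0
  have hderiv (t : ℝ) := hcont.integral_hasStrictDerivAt 0 t
  refine ⟨fun t => ∫ s in (0 : ℝ)..t, f (max s 0), intervalIntegral.integral_same,
    fun t _ => (hderiv t).hasDerivAt.continuousAt.continuousWithinAt, fun t ht => ?_⟩
  simpa only [max_eq_left ht.le] using (hderiv t).hasDerivAt

end Curves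

/-! ### Forced heat equations -/

section Relations

variable {H : Type*} [NormedAddCommGroup H] [InnerProductSpace ℝ H]

/-- A symmetric nonnegative linear relation. It stands for the operator `A`, given through its
graph: `(x, a) ∈ Γ` means `x ∈ D(A)` and `A x = a`. -/
structure IsNonnegSymmetric (Γ : Submodule ℝ (H × H)) : Prop where
  symm : ∀ p ∈ Γ, ∀ q ∈ Γ, ⟪p.2, q.1⟫_ℝ = ⟪p.1, q.2⟫_ℝ
  nonneg : ∀ p ∈ Γ, 0 ≤ ⟪p.2, p.1⟫_ℝ

lemma IsNonnegSymmetric.hasDerivAt_inner {Γ : Submodule ℝ (H × H)} (hΓ : IsNonnegSymmetric Γ)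
    {z a : ℝ → H} {z' : H} {t : ℝ} (hz : HasDerivAt z z' t) (ha : ContinuousAt a t)
    (hmem : ∀ᶠ s in 𝓝 t, (z s, a s) ∈ Γ) :
    HasDerivAt (fun s => ⟪a s, z s⟫_ℝ) (2 * ⟪a t, z'⟫_ℝ) t := by
  rw [hasDerivAt_iff_tendsto_slope] at hz ⊢
  have hlim : Tendsto (fun s => ⟪a s + a t, slope z t s⟫_ℝ) (𝓝[≠] t) (𝓝 ⟪a t + a t, z'⟫_ℝ) :=
    ((ha.tendsto.mono_left nhdsWithin_le_nhds).add_const (a t)).inner hz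
  rw [inner_add_left, ← two_mul] at hlim
  refine hlim.congr' ?_
  filter_upwards [nhdsWithin_le_nhds hmem] with s hs
  have hsymm := hΓ.symm _ hs _ hmem.self_of_nhds
  simp only [slope_def_module, inner_smul_right, smul_eq_mul, inner_add_left, inner_sub_right]
  rw [hsymm, real_inner_comm (a t) (z s)]
  ring

/-- A bounded symmetric operator bounded below by the constant `c > 0`. -/
structure IsCoerciveSymmetric (B : H →L[ℝ] H) (c : ℝ) : Prop where
  pos : 0 < c
  symm : ∀ x y, ⟪B x, y⟫_ℝ = ⟪x, B y⟫_ℝ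
  le_inner : ∀ x, c * ‖x‖ ^ 2 ≤ ⟪B x, x⟫_ℝ

namespace IsCoerciveSymmetric

variable {B : H →L[ℝ] H} {c : ℝ}

lemma inner_nonneg (hB : IsCoerciveSymmetric B c) (x : H) : 0 ≤ ⟪B x, x⟫_ℝ :=
  (mul_nonneg hB.pos.le (sq_nonneg _)).trans (hB.le_inner x)

lemma two_mul_inner_le (hB : IsCoerciveSymmetric B c) (x y : H) {s : ℝ} (hs : 0 < s) :
    2 * ⟪x, y⟫_ℝ ≤ s * ‖x‖ ^ 2 / c + ⟪B y, y⟫_ℝ / s := by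
  have hc := hB.pos
  have hyoung : s * ‖x‖ ^ 2 / c + c * ‖y‖ ^ 2 / s - 2 * (‖x‖ * ‖y‖)
      = (s * ‖x‖ - c * ‖y‖) ^ 2 / (c * s) := by
    field_simp
    ring
  calc 2 * ⟪x, y⟫_ℝ ≤ 2 * (‖x‖ * ‖y‖) := by gcongr; exact real_inner_le_norm x y
    _ ≤ s * ‖x‖ ^ 2 / c + c * ‖y‖ ^ 2 / s := by
      rw [← sub_nonneg, hyoung]
      positivity
    _ ≤ s * ‖x‖ ^ 2 / c + ⟪B y, y⟫_ℝ / s := by gcongr; exact hB.le_inner y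

lemma hasDerivAt_inner (hB : IsCoerciveSymmetric B c) {z : ℝ → H} {z' : H} {t : ℝ}
    (hz : HasDerivAt z z' t) :
    HasDerivAt (fun s => ⟪B (z s), z s⟫_ℝ) (2 * ⟪B z', z t⟫_ℝ) t := by
  refine ((B.hasFDerivAt.comp_hasDerivAt t hz).inner ℝ hz).congr_deriv ?_
  rw [Function.comp_apply, hB.symm (z t) z', real_inner_comm]
  ring

end IsCoerciveSymmetric

lemma inner_map_self_le (B : H →L[ℝ] H) (x : H) : ⟪B x, x⟫_ℝ ≤ ‖B‖ * ‖x‖ ^ 2 :=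
  calc ⟪B x, x⟫_ℝ ≤ ‖B x‖ * ‖x‖ := real_inner_le_norm _ _
    _ ≤ ‖B‖ * ‖x‖ * ‖x‖ := by gcongr; exact B.le_opNorm x
    _ = ‖B‖ * ‖x‖ ^ 2 := by ring

/-- `z` solves the forced heat equation `B z' + A z = g` on `[0, ∞)`, where `Γ` is the graph of
`A` and `z'` is the derivative of `z`. -/
structure IsForcedHeat (Γ : Submodule ℝ (H × H)) (B : H →L[ℝ] H) (g z z' : ℝ → H) : Prop where
  continuousOn_forcing : ContinuousOn g (Ici 0)
  continuousOn : ContinuousOn z (Ici 0)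
  continuousOn_deriv : ContinuousOn z' (Ici 0)
  hasDerivAt : ∀ t > 0, HasDerivAt z (z' t) t
  mem : ∀ t ≥ 0, (z t, g t - B (z' t)) ∈ Γ

namespace IsForcedHeat

variable {Γ : Submodule ℝ (H × H)} {B : H →L[ℝ] H} {c : ℝ} {g h z y y' : ℝ → H} {t : ℝ}

lemma continuousOn_operator (hz : IsForcedHeat Γ B g z y) :
    ContinuousOn (fun t => g t - B (y t)) (Ici 0) :=
  hz.continuousOn_forcing.sub (B.continuous.comp_continuousOn hz.continuousOn_deriv)

lemma sub (hz : IsForcedHeat Γ B g z y) {g₂ z₂ y₂ : ℝ → H} (hz₂ : IsForcedHeat Γ B g₂ z₂ y₂) :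
    IsForcedHeat Γ B (fun t => g t - g₂ t) (fun t => z t - z₂ t) (fun t => y t - y₂ t) where
  continuousOn_forcing := hz.continuousOn_forcing.sub hz₂.continuousOn_forcing
  continuousOn := hz.continuousOn.sub hz₂.continuousOn
  continuousOn_deriv := hz.continuousOn_deriv.sub hz₂.continuousOn_deriv
  hasDerivAt t ht := (hz.hasDerivAt t ht).sub (hz₂.hasDerivAt t ht)
  mem t ht := by
    have hsub := Γ.sub_mem (hz.mem t ht) (hz₂.mem t ht)
    rwa [Prod.mk_sub_mk, sub_sub_sub_comm, ← map_sub] at hsub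

lemma of_mem {p : H × H} (hp : p ∈ Γ) :
    IsForcedHeat Γ B (fun _ => p.2) (fun _ => p.1) (fun _ => 0) where
  continuousOn_forcing := continuousOn_const
  continuousOn := continuousOn_const
  continuousOn_deriv := continuousOn_const
  hasDerivAt t _ := hasDerivAt_const t p.1
  mem t _ := by rwa [map_zero, sub_zero]

lemma diffQuot (hz : IsForcedHeat Γ B g z y) {δ : ℝ} (hδ : 0 < δ) :
    IsForcedHeat Γ B (diffQuot δ g) (diffQuot δ z) (diffQuot δ y) where
  continuousOn_forcing := continuousOn_diffQuot hδ hz.continuousOn_forcing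
  continuousOn := continuousOn_diffQuot hδ hz.continuousOn
  continuousOn_deriv := continuousOn_diffQuot hδ hz.continuousOn_deriv
  hasDerivAt _ ht := hasDerivAt_diffQuot hδ hz.hasDerivAt ht
  mem t ht := by
    have hmem := Γ.smul_mem δ⁻¹ (Γ.sub_mem (hz.mem (t + δ) (add_nonneg ht hδ.le)) (hz.mem t ht))
    rwa [Prod.mk_sub_mk, Prod.smul_mk, sub_sub_sub_comm, ← map_sub, smul_sub _ (_ - _),
      ← map_smul] at hmem

lemma exists_primitive [CompleteSpace H] (hΓ : IsClosed (Γ : Set (H × H)))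
    (hz : IsForcedHeat Γ B g z y) {G : ℝ → H} (hGc : ContinuousOn G (Ici 0))
    (hG : ∀ t > 0, HasDerivAt G (g t) t) (hG0 : G 0 = B (z 0)) :
    ∃ Z, Z 0 = 0 ∧ IsForcedHeat Γ B G Z z := by
  obtain ⟨Z, hZ0, hZc, hZ⟩ := _root_.exists_primitive hz.continuousOn
  refine ⟨Z, hZ0, hGc, hZc, hz.continuousOn, hZ, fun t ht => ?_⟩
  refine mem_of_hasDerivAt_mem (f := fun t => (Z t, G t - B (z t))) hΓ
    (hZc.prodMk (hGc.sub (B.continuous.comp_continuousOn hz.continuousOn)))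
    (fun s hs => (hZ s hs).prodMk
      ((hG s hs).sub (B.hasFDerivAt.comp_hasDerivAt s (hz.hasDerivAt s hs))))
    (fun s hs => hz.mem s (le_of_lt hs)) ?_ ht
  simp only [hZ0, hG0, sub_self]
  exact Γ.zero_mem

lemma hasDerivAt_inner_operator (hz : IsForcedHeat Γ B g z y) (hΓ : IsNonnegSymmetric Γ)
    (ht : 0 < t) :
    HasDerivAt (fun s => ⟪g s - B (y s), z s⟫_ℝ) (2 * ⟪g t - B (y t), y t⟫_ℝ) t :=
  hΓ.hasDerivAt_inner (hz.hasDerivAt t ht) (hz.continuousOn_operator.continuousAt (Ici_mem_nhds ht))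
    ((eventually_ge_nhds ht).mono hz.mem)

lemma eventually_inner_le (hz : IsForcedHeat Γ B g z y) (hB : IsCoerciveSymmetric B c)
    (hΓ : IsNonnegSymmetric Γ) {ε : ℝ} (hε : 0 < ε) (hg : ∀ᶠ t in atTop, ‖g t‖ ≤ ε) :
    ∀ᶠ t in atTop, ⟪B (z t), z t⟫_ℝ ≤ 3 * (ε ^ 2 / c) * t ^ 2 := by
  have hc := hB.pos
  have hderiv : ∀ t > 0, HasDerivAt (fun s => ⟪B (z s), z s⟫_ℝ / s)
      ((2 * ⟪B (y t), z t⟫_ℝ * t - ⟪B (z t), z t⟫_ℝ * 1) / t ^ 2) t := fun t ht =>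
    (hB.hasDerivAt_inner (hz.hasDerivAt t ht)).fun_div (hasDerivAt_id t) ht.ne'
  have hgrowth := eventually_le_mul_pow_of_hasDerivAt_le (j := 0) (m := 0)
    (by positivity : 0 < ε ^ 2 / c) ⟨univ, univ_mem, integrableOn_zero⟩
    (Eventually.of_forall fun _ => le_rfl) ((eventually_gt_atTop 0).mono hderiv) <| by
      filter_upwards [eventually_gt_atTop 0, hg] with t ht hgt
      have hA := hΓ.nonneg _ (hz.mem t ht.le)
      rw [inner_sub_left] at hA
      have hyoung := hB.two_mul_inner_le (g t) (z t) ht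
      rw [div_le_iff₀ (by positivity)]
      calc 2 * ⟪B (y t), z t⟫_ℝ * t - ⟪B (z t), z t⟫_ℝ * 1
          ≤ (t * ‖g t‖ ^ 2 / c + ⟪B (z t), z t⟫_ℝ / t) * t - ⟪B (z t), z t⟫_ℝ * 1 := by
            gcongr
            linarith
        _ = ‖g t‖ ^ 2 / c * t ^ 2 := by
            field_simp
            ring
        _ ≤ ε ^ 2 / c * t ^ 2 := by gcongr
        _ = _ := by simp
  filter_upwards [hgrowth, eventually_gt_atTop 0] with t hgt ht
  rw [div_le_iff₀ ht] at hgt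
  linarith

/-- The weighted energy of the parabolic smoothing estimate. It bounds the derivative `y` of a
solution `z` of `B z' + A z = g`, and `g t - B (y t)` is the value of `A z`.
The factor `3 / 2` cancels `⟪A z, z⟫` in the derivative; the factor `5` leaves enough of
`-t ^ 3 * ⟪B y, y⟫` there to absorb the forcing terms. -/
noncomputable def smoothingEnergy (B : H →L[ℝ] H) (g z y : ℝ → H) (t : ℝ) : ℝ :=
  t ^ 4 * ⟪B (y t), y t⟫_ℝ +
    5 * (t ^ 3 * ⟪g t - B (y t), z t⟫_ℝ + 3 / 2 * (t ^ 2 * ⟪B (z t), z t⟫_ℝ))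

lemma le_smoothingEnergy (hz : IsForcedHeat Γ B g z y) (hB : IsCoerciveSymmetric B c)
    (hΓ : IsNonnegSymmetric Γ) (ht : 0 ≤ t) :
    t ^ 4 * (c * ‖y t‖ ^ 2) ≤ smoothingEnergy B g z y t := by
  have hA := hΓ.nonneg _ (hz.mem t ht)
  have hBz := hB.inner_nonneg (z t)
  calc t ^ 4 * (c * ‖y t‖ ^ 2) ≤ t ^ 4 * ⟪B (y t), y t⟫_ℝ := by gcongr; exact hB.le_inner _
    _ ≤ smoothingEnergy B g z y t := le_add_of_nonneg_right (by positivity)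

lemma hasDerivAt_smoothingEnergy (hz : IsForcedHeat Γ B g z y) (hy : IsForcedHeat Γ B h y y')
    (hB : IsCoerciveSymmetric B c) (hΓ : IsNonnegSymmetric Γ) (ht : 0 < t) :
    HasDerivAt (smoothingEnergy B g z y)
      (2 * t ^ 4 * ⟪h t, y t⟫_ℝ + 10 * t ^ 3 * ⟪g t, y t⟫_ℝ + 15 * t ^ 2 * ⟪g t, z t⟫_ℝ
        + 15 * t * ⟪B (z t), z t⟫_ℝ - 6 * t ^ 3 * ⟪B (y t), y t⟫_ℝ
        - 2 * t ^ 4 * ⟪h t - B (y' t), y t⟫_ℝ) t := by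
  have hBy := (hasDerivAt_pow 4 t).mul (hB.hasDerivAt_inner (hy.hasDerivAt t ht))
  have hAz := (hasDerivAt_pow 3 t).mul (hz.hasDerivAt_inner_operator hΓ ht)
  have hBz := (hasDerivAt_pow 2 t).mul (hB.hasDerivAt_inner (hz.hasDerivAt t ht))
  refine (hBy.add ((hAz.add (hBz.const_mul (3 / 2))).const_mul 5)).congr_deriv ?_
  simp only [inner_sub_left]
  norm_num
  ring

lemma deriv_smoothingEnergy_le (hz : IsForcedHeat Γ B g z y) (hy : IsForcedHeat Γ B h y y')
    (hB : IsCoerciveSymmetric B c) (hΓ : IsNonnegSymmetric Γ) (ht : 0 < t) :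
    deriv (smoothingEnergy B g z y) t ≤ (t ^ 5 * ‖h t‖ ^ 2 + 25 / 2 * (t ^ 3 * ‖g t‖ ^ 2)) / c
      + 45 / 2 * (t * ⟪B (z t), z t⟫_ℝ) := by
  rw [(hz.hasDerivAt_smoothingEnergy hy hB hΓ ht).deriv]
  have hAy := mul_nonneg (by positivity : 0 ≤ 2 * t ^ 4) (hΓ.nonneg _ (hy.mem t ht.le))
  have hhy := mul_le_mul_of_nonneg_left (hB.two_mul_inner_le (h t) (y t) ht)
    (by positivity : 0 ≤ t ^ 4)
  have hgy := mul_le_mul_of_nonneg_left (hB.two_mul_inner_le (g t) (y t) one_pos)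
    (by positivity : 0 ≤ 5 * t ^ 3)
  have hgz := mul_le_mul_of_nonneg_left (hB.two_mul_inner_le (g t) (z t) ht)
    (by positivity : 0 ≤ 15 / 2 * t ^ 2)
  have hsum : t ^ 4 * (t * ‖h t‖ ^ 2 / c + ⟪B (y t), y t⟫_ℝ / t)
      + 5 * t ^ 3 * (1 * ‖g t‖ ^ 2 / c + ⟪B (y t), y t⟫_ℝ / 1)
      + 15 / 2 * t ^ 2 * (t * ‖g t‖ ^ 2 / c + ⟪B (z t), z t⟫_ℝ / t)
      = (t ^ 5 * ‖h t‖ ^ 2 + 25 / 2 * (t ^ 3 * ‖g t‖ ^ 2)) / c + 6 * t ^ 3 * ⟪B (y t), y t⟫_ℝ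
        + 15 / 2 * (t * ⟪B (z t), z t⟫_ℝ) := by
    have hc := hB.pos
    field_simp
    ring
  linarith

lemma eventually_hasDerivAt_smoothingEnergy (hz : IsForcedHeat Γ B g z y)
    (hy : IsForcedHeat Γ B h y y') (hB : IsCoerciveSymmetric B c) (hΓ : IsNonnegSymmetric Γ) :
    ∀ᶠ t in atTop,
      HasDerivAt (smoothingEnergy B g z y) (deriv (smoothingEnergy B g z y) t) t :=
  (eventually_gt_atTop 0).mono fun _ ht =>
    (hz.hasDerivAt_smoothingEnergy hy hB hΓ ht).differentiableAt.hasDerivAt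

lemma eventually_norm_deriv_le (hz : IsForcedHeat Γ B g z y) (hy : IsForcedHeat Γ B h y y')
    (hB : IsCoerciveSymmetric B c) (hΓ : IsNonnegSymmetric Γ) {ε : ℝ} (hε : 0 < ε)
    (hg : ∀ᶠ t in atTop, ‖g t‖ ≤ ε) (hh : IntegrableAtFilter (fun t => t * ‖h t‖ ^ 2) atTop) :
    ∀ᶠ t in atTop, ‖y t‖ ≤ 16 * ε / c := by
  have hc := hB.pos
  have henergy := eventually_le_mul_pow_of_hasDerivAt_le (m := 3)
    (by positivity : 0 < 80 * (ε ^ 2 / c)) (hh.smul c⁻¹)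
    ((eventually_ge_atTop 0).mono fun t ht => by
      simp only [Pi.smul_apply, smul_eq_mul]
      positivity) (hz.eventually_hasDerivAt_smoothingEnergy hy hB hΓ) <| by
    filter_upwards [eventually_gt_atTop 0, hg, hz.eventually_inner_le hB hΓ hε hg] with t ht hgt hBz
    calc deriv (smoothingEnergy B g z y) t
        ≤ (t ^ 5 * ‖h t‖ ^ 2 + 25 / 2 * (t ^ 3 * ‖g t‖ ^ 2)) / c
          + 45 / 2 * (t * ⟪B (z t), z t⟫_ℝ) := hz.deriv_smoothingEnergy_le hy hB hΓ ht
      _ ≤ (t ^ 5 * ‖h t‖ ^ 2 + 25 / 2 * (t ^ 3 * ε ^ 2)) / c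
          + 45 / 2 * (t * (3 * (ε ^ 2 / c) * t ^ 2)) := by gcongr
      _ = t ^ (3 + 1) * (c⁻¹ * (t * ‖h t‖ ^ 2)) + 80 * (ε ^ 2 / c) * t ^ 3 := by
          field_simp
          ring
  filter_upwards [henergy, eventually_gt_atTop 0] with t htE ht
  have hle := (hz.le_smoothingEnergy hB hΓ ht.le).trans htE
  refine (sq_le_sq₀ (norm_nonneg _) (by positivity)).1 ?_
  calc ‖y t‖ ^ 2 = t ^ 4 * (c * ‖y t‖ ^ 2) / (c * t ^ 4) := by field_simp
    _ ≤ 3 * (80 * (ε ^ 2 / c)) * t ^ (3 + 1) / (c * t ^ 4) := by gcongr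
    _ = 240 * (ε / c) ^ 2 := by
        field_simp
        ring
    _ ≤ 256 * (ε / c) ^ 2 := by gcongr; norm_num
    _ = (16 * ε / c) ^ 2 := by ring

theorem tendsto_deriv_zero (hz : IsForcedHeat Γ B g z y) (hy : IsForcedHeat Γ B h y y')
    (hB : IsCoerciveSymmetric B c) (hΓ : IsNonnegSymmetric Γ)
    (hdense : Dense (Prod.snd '' (Γ : Set (H × H)))) {gInf : H} (hg : Tendsto g atTop (𝓝 gInf))
    (hh : IntegrableAtFilter (fun t => t * ‖h t‖ ^ 2) atTop) : Tendsto y atTop (𝓝 0) := by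
  have hc := hB.pos
  refine Metric.nhds_basis_closedBall.tendsto_right_iff.2 fun δ hδ => ?_
  have hε : 0 < c * δ / 16 := by positivity
  obtain ⟨_, ⟨p, hp, rfl⟩, hball⟩ := hdense.exists_mem_open Metric.isOpen_ball
    ⟨gInf, Metric.mem_ball_self hε⟩
  have hforcing : ∀ᶠ t in atTop, ‖g t - p.2‖ ≤ c * δ / 16 :=
    ((hg.sub_const p.2).norm.eventually_lt_const
      (by rwa [← dist_eq_norm, dist_comm, ← Metric.mem_ball])).mono fun _ => le_of_lt
  have hshift := hz.sub (of_mem (B := B) hp)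
  simp only [sub_zero] at hshift
  filter_upwards [hshift.eventually_norm_deriv_le hy hB hΓ hε hforcing hh] with t ht
  rw [mem_closedBall_zero_iff]
  refine ht.trans_eq ?_
  field_simp

theorem tendsto_mul_norm_deriv_zero (hz : IsForcedHeat Γ B g z y) (hy : IsForcedHeat Γ B h y y')
    (hB : IsCoerciveSymmetric B c) (hΓ : IsNonnegSymmetric Γ) (hz0 : Tendsto z atTop (𝓝 0))
    (hg : IntegrableAtFilter (fun t => t * ‖g t‖ ^ 2) atTop)
    (hh : IntegrableAtFilter (fun t => t ^ 3 * ‖h t‖ ^ 2) atTop) :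
    Tendsto (fun t => t * ‖y t‖) atTop (𝓝 0) := by
  have hc := hB.pos
  refine Metric.nhds_basis_closedBall.tendsto_right_iff.2 fun δ hδ => ?_
  have hκ : 0 < c * δ ^ 2 / 3 := by positivity
  have hBz : ∀ᶠ t in atTop, 45 / 2 * ⟪B (z t), z t⟫_ℝ < c * δ ^ 2 / 3 := by
    have hlim := (((B.continuous.tendsto 0).comp hz0).inner (𝕜 := ℝ) hz0).const_mul (45 / 2)
    rw [inner_zero_right, mul_zero] at hlim
    exact hlim.eventually_lt_const hκ
  have henergy := eventually_le_mul_pow_of_hasDerivAt_le (m := 1) hκ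
    ((hh.add (hg.smul (25 / 2 : ℝ))).smul c⁻¹)
    ((eventually_ge_atTop 0).mono fun t ht => by
      simp only [Pi.smul_apply, Pi.add_apply, smul_eq_mul]
      positivity) (hz.eventually_hasDerivAt_smoothingEnergy hy hB hΓ) <| by
    filter_upwards [eventually_gt_atTop 0, hBz] with t ht hBzt
    calc deriv (smoothingEnergy B g z y) t
        ≤ (t ^ 5 * ‖h t‖ ^ 2 + 25 / 2 * (t ^ 3 * ‖g t‖ ^ 2)) / c
          + 45 / 2 * (t * ⟪B (z t), z t⟫_ℝ) := hz.deriv_smoothingEnergy_le hy hB hΓ ht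
      _ = t ^ (1 + 1) * (c⁻¹ * (t ^ 3 * ‖h t‖ ^ 2 + 25 / 2 * (t * ‖g t‖ ^ 2)))
          + 45 / 2 * ⟪B (z t), z t⟫_ℝ * t ^ 1 := by
          field_simp
          ring
      _ ≤ _ := by
          simp only [Pi.smul_apply, Pi.add_apply, smul_eq_mul]
          gcongr
  filter_upwards [henergy, eventually_gt_atTop 0] with t htE ht
  have hle := (hz.le_smoothingEnergy hB hΓ ht.le).trans htE
  rw [mem_closedBall_zero_iff, norm_mul, norm_norm, Real.norm_of_nonneg ht.le]
  refine (sq_le_sq₀ (by positivity) hδ.le).1 ?_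
  calc (t * ‖y t‖) ^ 2 = t ^ 4 * (c * ‖y t‖ ^ 2) / (c * t ^ 2) := by field_simp
    _ ≤ 3 * (c * δ ^ 2 / 3) * t ^ (1 + 1) / (c * t ^ 2) := by gcongr
    _ = δ ^ 2 := by field_simp

end IsForcedHeat

/-! ### Damped waves -/

/-- `u` solves the damped wave equation `u'' + B u' + A u = 0` on `[0, ∞)`, where `Γ` is the graph
of `A`. It is read as the heat equation `B u' + A u = -u''` with forcing `-u''`. -/
structure IsDampedWave (Γ : Submodule ℝ (H × H)) (B : H →L[ℝ] H) (u u' u'' : ℝ → H) : Prop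
    extends toIsForcedHeat : IsForcedHeat Γ B (fun t => -u'' t) u u' where
  hasDerivAt_deriv : ∀ t > 0, HasDerivAt u' (u'' t) t

namespace IsDampedWave

variable {Γ : Submodule ℝ (H × H)} {B : H →L[ℝ] H} {c : ℝ} {u u' u'' : ℝ → H} {t : ℝ}

/-- The energy `‖u'‖² + ⟪A u, u⟫` of a damped wave, with `A u` written as `-u'' - B u'`. -/
noncomputable def energy (B : H →L[ℝ] H) (u u' u'' : ℝ → H) (t : ℝ) : ℝ :=
  ‖u' t‖ ^ 2 + ⟪-u'' t - B (u' t), u t⟫_ℝ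

/-- The multiplier functional obtained by pairing the equation with `u`; its derivative produces
the potential part of the energy with a negative sign. -/
noncomputable def virial (B : H →L[ℝ] H) (u u' : ℝ → H) (t : ℝ) : ℝ :=
  2 * ⟪u' t, u t⟫_ℝ + ⟪B (u t), u t⟫_ℝ

lemma continuousOn_deriv_deriv (hu : IsDampedWave Γ B u u' u'') : ContinuousOn u'' (Ici 0) := by
  simpa only [neg_neg] using hu.continuousOn_forcing.fun_neg

lemma continuousOn_energy (hu : IsDampedWave Γ B u u' u'') :
    ContinuousOn (energy B u u' u'') (Ici 0) :=
  (hu.continuousOn_deriv.norm.pow 2).add (hu.continuousOn_operator.inner hu.continuousOn)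

lemma continuousOn_virial (hu : IsDampedWave Γ B u u' u'') :
    ContinuousOn (virial B u u') (Ici 0) :=
  ((hu.continuousOn_deriv.inner hu.continuousOn).const_mul 2).add
    ((B.continuous.comp_continuousOn hu.continuousOn).inner hu.continuousOn)

lemma hasDerivAt_energy (hu : IsDampedWave Γ B u u' u'') (hΓ : IsNonnegSymmetric Γ) (ht : 0 < t) :
    HasDerivAt (energy B u u' u'') (-2 * ⟪B (u' t), u' t⟫_ℝ) t := by
  refine ((hu.hasDerivAt_deriv t ht).norm_sq.add
    (hu.hasDerivAt_inner_operator hΓ ht)).congr_deriv ?_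
  rw [inner_sub_left, inner_neg_left, real_inner_comm]
  ring

lemma hasDerivAt_virial (hu : IsDampedWave Γ B u u' u'') (hB : IsCoerciveSymmetric B c)
    (ht : 0 < t) :
    HasDerivAt (virial B u u') (4 * ‖u' t‖ ^ 2 - 2 * energy B u u' u'' t) t := by
  refine ((((hu.hasDerivAt_deriv t ht).inner ℝ (hu.hasDerivAt t ht)).const_mul 2).add
    (hB.hasDerivAt_inner (hu.hasDerivAt t ht))).congr_deriv ?_
  rw [energy, inner_sub_left, inner_neg_left, real_inner_self_eq_norm_sq]
  ring

lemma norm_deriv_sq_le_energy (hu : IsDampedWave Γ B u u' u'') (hΓ : IsNonnegSymmetric Γ)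
    (ht : 0 ≤ t) : ‖u' t‖ ^ 2 ≤ energy B u u' u'' t :=
  le_add_of_nonneg_right (hΓ.nonneg _ (hu.mem t ht))

lemma neg_energy_div_le_virial (hu : IsDampedWave Γ B u u' u'') (hB : IsCoerciveSymmetric B c)
    (hΓ : IsNonnegSymmetric Γ) (ht : 0 ≤ t) :
    -(energy B u u' u'' t / c) ≤ virial B u u' t := by
  have hyoung := hB.two_mul_inner_le (-u' t) (u t) one_pos
  rw [inner_neg_left, norm_neg, one_mul, div_one] at hyoung
  have hE := div_le_div_of_nonneg_right (hu.norm_deriv_sq_le_energy hΓ ht) hB.pos.le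
  rw [virial]
  linarith

lemma virial_le (B : H →L[ℝ] H) (u u' : ℝ → H) (t : ℝ) :
    virial B u u' t ≤ ‖u' t‖ ^ 2 + (1 + ‖B‖) * ‖u t‖ ^ 2 := by
  have hcross := real_inner_le_norm (u' t) (u t)
  have hsq := sq_nonneg (‖u' t‖ - ‖u t‖)
  have hBu := inner_map_self_le B (u t)
  rw [virial]
  linarith

lemma exists_integral_add_le (hu : IsDampedWave Γ B u u' u'') (hB : IsCoerciveSymmetric B c)
    (hΓ : IsNonnegSymmetric Γ) :
    ∃ C, ∀ T ≥ 0, 2 * c * (∫ s in (0 : ℝ)..T, s * ‖u' s‖ ^ 2) + T * ‖u' T‖ ^ 2 ≤ C := by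
  set F : ℝ → ℝ := fun t => energy B u u' u'' t / c + virial B u u' t / 2
    + t * energy B u u' u'' t with hF
  have hc := hB.pos
  have hFc : ContinuousOn F (Ici 0) := ((hu.continuousOn_energy.div_const c).add
    (hu.continuousOn_virial.div_const 2)).add (continuousOn_id.mul hu.continuousOn_energy)
  have hderiv (t : ℝ) (ht : t > 0) := (((hu.hasDerivAt_energy hΓ ht).div_const c).add
    ((hu.hasDerivAt_virial hB ht).div_const 2)).add
      ((hasDerivAt_id t).mul (hu.hasDerivAt_energy hΓ ht))
  refine ⟨F 0, fun T hT => ?_⟩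
  have hint := integral_le_sub_of_hasDerivAt_le_neg (φ := fun s => 2 * c * (s * ‖u' s‖ ^ 2)) hT hFc
    hderiv (continuousOn_const.mul (continuousOn_id.mul (hu.continuousOn_deriv.norm.pow 2))) <| by
      intro t ht
      have hle := hB.le_inner (u' t)
      have hle' : ‖u' t‖ ^ 2 ≤ ⟪B (u' t), u' t⟫_ℝ / c := (le_div_iff₀' hc).2 hle
      have htle := mul_le_mul_of_nonneg_left hle (le_of_lt ht)
      simp only [id]
      rw [mul_div_assoc]
      linarith
  rw [intervalIntegral.integral_const_mul] at hint
  have hFT : T * ‖u' T‖ ^ 2 ≤ F T := by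
    have hE := hu.norm_deriv_sq_le_energy hΓ hT
    have hEc : 0 ≤ energy B u u' u'' T / c := div_nonneg ((sq_nonneg _).trans hE) hc.le
    have hX := hu.neg_energy_div_le_virial hB hΓ hT
    have hTE := mul_le_mul_of_nonneg_left hE hT
    simp only [hF]
    linarith
  linarith

lemma tendsto_deriv_zero (hu : IsDampedWave Γ B u u' u'') (hB : IsCoerciveSymmetric B c)
    (hΓ : IsNonnegSymmetric Γ) : Tendsto u' atTop (𝓝 0) := by
  obtain ⟨C, hC⟩ := hu.exists_integral_add_le hB hΓ
  have hsq : Tendsto (fun t => ‖u' t‖ ^ 2) atTop (𝓝 0) := by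
    refine squeeze_zero' (Eventually.of_forall fun _ => sq_nonneg _) ?_
      (tendsto_const_nhds (x := C).div_atTop tendsto_id)
    filter_upwards [eventually_gt_atTop 0] with t ht
    have hint : 0 ≤ ∫ s in (0 : ℝ)..t, s * ‖u' s‖ ^ 2 :=
      intervalIntegral.integral_nonneg ht.le fun s hs => mul_nonneg hs.1 (sq_nonneg _)
    have hcint := mul_nonneg (mul_nonneg zero_le_two hB.pos.le) hint
    rw [id, le_div_iff₀' ht]
    linarith [hC t ht.le]
  rw [tendsto_zero_iff_norm_tendsto_zero]
  simpa using hsq.sqrt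

lemma integrableAtFilter_mul_norm_deriv_sq (hu : IsDampedWave Γ B u u' u'')
    (hB : IsCoerciveSymmetric B c) (hΓ : IsNonnegSymmetric Γ) :
    IntegrableAtFilter (fun t => t * ‖u' t‖ ^ 2) atTop := by
  obtain ⟨C, hC⟩ := hu.exists_integral_add_le hB hΓ
  refine integrableAtFilter_atTop_of_intervalIntegral_le (C := C / (2 * c))
    (continuousOn_id.mul (hu.continuousOn_deriv.norm.pow 2))
    ((eventually_ge_atTop 0).mono fun t ht => by positivity) ?_
  filter_upwards [eventually_ge_atTop 0] with t ht
  rw [le_div_iff₀' (mul_pos two_pos hB.pos)]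
  linarith [hC t ht, mul_nonneg ht (sq_nonneg ‖u' t‖)]

lemma diffQuot (hu : IsDampedWave Γ B u u' u'') {δ : ℝ} (hδ : 0 < δ) :
    IsDampedWave Γ B (diffQuot δ u) (diffQuot δ u') (diffQuot δ u'') where
  toIsForcedHeat := by
    convert hu.toIsForcedHeat.diffQuot hδ using 2 with t
    simp only [_root_.diffQuot]
    module
  hasDerivAt_deriv _ ht := hasDerivAt_diffQuot hδ hu.hasDerivAt_deriv ht

/-- The energy with weight `t ^ 3`, corrected by a multiple of the virial so that the terms of
order `t ^ 2` in its derivative involve only the kinetic energy. -/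
noncomputable def cubicEnergy (B : H →L[ℝ] H) (u u' u'' : ℝ → H) (t : ℝ) : ℝ :=
  t ^ 3 * energy B u u' u'' t + 3 / 2 * (t ^ 2 * virial B u u' t)

lemma continuousOn_cubicEnergy (hu : IsDampedWave Γ B u u' u'') :
    ContinuousOn (cubicEnergy B u u' u'') (Ici 0) :=
  ((continuousOn_pow 3).mul hu.continuousOn_energy).add
    (continuousOn_const.mul ((continuousOn_pow 2).mul hu.continuousOn_virial))

lemma hasDerivAt_cubicEnergy (hu : IsDampedWave Γ B u u' u'') (hB : IsCoerciveSymmetric B c)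
    (hΓ : IsNonnegSymmetric Γ) (ht : 0 < t) :
    HasDerivAt (cubicEnergy B u u' u'')
      (6 * t ^ 2 * ‖u' t‖ ^ 2 + 3 * t * virial B u u' t - 2 * t ^ 3 * ⟪B (u' t), u' t⟫_ℝ) t := by
  refine (((hasDerivAt_pow 3 t).mul (hu.hasDerivAt_energy hΓ ht)).add
    (((hasDerivAt_pow 2 t).mul (hu.hasDerivAt_virial hB ht)).const_mul (3 / 2))).congr_deriv ?_
  norm_num
  ring

lemma cubicEnergy_nonneg (hu : IsDampedWave Γ B u u' u'') (hB : IsCoerciveSymmetric B c)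
    (hΓ : IsNonnegSymmetric Γ) (ht : 3 / (2 * c) ≤ t) : 0 ≤ cubicEnergy B u u' u'' t := by
  have hc := hB.pos
  have ht0 : 0 ≤ t := le_trans (by positivity) ht
  have hE : 0 ≤ energy B u u' u'' t := (sq_nonneg _).trans (hu.norm_deriv_sq_le_energy hΓ ht0)
  calc 0 ≤ t ^ 2 * energy B u u' u'' t * (t - 3 / (2 * c)) :=
        mul_nonneg (by positivity) (sub_nonneg.2 ht)
    _ = t ^ 3 * energy B u u' u'' t + 3 / 2 * (t ^ 2 * -(energy B u u' u'' t / c)) := by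
        field_simp
        ring
    _ ≤ cubicEnergy B u u' u'' t := by
        unfold cubicEnergy
        gcongr
        exact hu.neg_energy_div_le_virial hB hΓ ht0

lemma integral_mul_norm_deriv_sq_le (hu : IsDampedWave Γ B u u' u'')
    (hB : IsCoerciveSymmetric B c) (hΓ : IsNonnegSymmetric Γ) {T : ℝ} (hT : 3 / (2 * c) ≤ T) :
    ∫ s in (0 : ℝ)..T, (2 * c * s ^ 3 - 6 * s ^ 2 - 3 * s) * ‖u' s‖ ^ 2
      ≤ ∫ s in (0 : ℝ)..T, 3 * (1 + ‖B‖) * s * ‖u s‖ ^ 2 := by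
  have hc := hB.pos
  have hT0 : 0 ≤ T := le_trans (by positivity) hT
  have hcontu' : ContinuousOn (fun s => (2 * c * s ^ 3 - 6 * s ^ 2 - 3 * s) * ‖u' s‖ ^ 2) (Ici 0) :=
    ContinuousOn.mul (by fun_prop) (hu.continuousOn_deriv.norm.pow 2)
  have hcontu : ContinuousOn (fun s => 3 * (1 + ‖B‖) * s * ‖u s‖ ^ 2) (Ici 0) :=
    ContinuousOn.mul (by fun_prop) (hu.continuousOn.norm.pow 2)
  have hint := integral_le_sub_of_hasDerivAt_le_neg hT0 hu.continuousOn_cubicEnergy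
    (fun _ ht => hu.hasDerivAt_cubicEnergy hB hΓ ht) (hcontu'.fun_sub hcontu) <| by
      intro t ht
      have hBu' := mul_le_mul_of_nonneg_left (hB.le_inner (u' t)) (by positivity : 0 ≤ 2 * t ^ 3)
      have hX := mul_le_mul_of_nonneg_left (virial_le B u u' t) (by positivity : 0 ≤ 3 * t)
      linarith
  rw [intervalIntegral.integral_sub
    ((hcontu'.mono Icc_subset_Ici_self).intervalIntegrable_of_Icc hT0)
    ((hcontu.mono Icc_subset_Ici_self).intervalIntegrable_of_Icc hT0)] at hint
  have hstart : cubicEnergy B u u' u'' 0 = 0 := by simp [cubicEnergy]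
  linarith [hu.cubicEnergy_nonneg hB hΓ hT]

lemma integral_mul_norm_deriv_deriv_sq_le (hu : IsDampedWave Γ B u u' u'')
    (hB : IsCoerciveSymmetric B c) (hΓ : IsNonnegSymmetric Γ) {T : ℝ} (hT : 3 / (2 * c) ≤ T) :
    ∫ s in (0 : ℝ)..T, (2 * c * s ^ 3 - 6 * s ^ 2 - 3 * s) * ‖u'' s‖ ^ 2
      ≤ ∫ s in (0 : ℝ)..T, 3 * (1 + ‖B‖) * s * ‖u' s‖ ^ 2 := by
  have hc := hB.pos
  have hT0 : 0 ≤ T := le_trans (by positivity) hT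
  refine le_of_tendsto_of_tendsto
    (tendsto_integral_mul_norm_diffQuot_sq hT0 hu.hasDerivAt_deriv hu.continuousOn_deriv_deriv
      (by fun_prop))
    (tendsto_integral_mul_norm_diffQuot_sq hT0 hu.hasDerivAt hu.continuousOn_deriv (by fun_prop)) ?_
  filter_upwards [self_mem_nhdsWithin] with δ hδ
  exact (hu.diffQuot hδ).integral_mul_norm_deriv_sq_le hB hΓ hT

lemma integrableAtFilter_pow_three_mul_norm_deriv_deriv_sq (hu : IsDampedWave Γ B u u' u'')
    (hB : IsCoerciveSymmetric B c) (hΓ : IsNonnegSymmetric Γ) :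
    IntegrableAtFilter (fun t => t ^ 3 * ‖u'' t‖ ^ 2) atTop := by
  have hc := hB.pos
  have hu''2 := hu.continuousOn_deriv_deriv.norm.pow 2
  obtain ⟨C, hC⟩ := hu.exists_integral_add_le hB hΓ
  have hweight : ∀ᶠ t in atTop, c * t ^ 3 ≤ 2 * c * t ^ 3 - 6 * t ^ 2 - 3 * t := by
    filter_upwards [eventually_ge_atTop 1, eventually_ge_atTop (9 / c)] with t h1 h9
    rw [div_le_iff₀' hc] at h9
    nlinarith [mul_le_mul_of_nonneg_right h9 (sq_nonneg t)]
  have hint : IntegrableAtFilter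
      (fun t => (2 * c * t ^ 3 - 6 * t ^ 2 - 3 * t) * ‖u'' t‖ ^ 2) atTop := by
    refine integrableAtFilter_atTop_of_intervalIntegral_le (C := 3 * (1 + ‖B‖) * (C / (2 * c)))
      (ContinuousOn.mul (by fun_prop) hu''2) ?_ ?_
    · filter_upwards [hweight, eventually_ge_atTop 0] with t hwt ht
      exact mul_nonneg (le_trans (by positivity) hwt) (sq_nonneg _)
    · filter_upwards [eventually_ge_atTop (3 / (2 * c)), eventually_ge_atTop 0] with t hct ht
      refine (hu.integral_mul_norm_deriv_deriv_sq_le hB hΓ hct).trans ?_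
      simp only [mul_assoc _ _ (‖u' _‖ ^ 2), intervalIntegral.integral_const_mul]
      gcongr
      rw [le_div_iff₀' (by positivity)]
      linarith [hC t ht, mul_nonneg ht (sq_nonneg ‖u' t‖)]
  refine integrableAtFilter_atTop_of_le ((continuousOn_pow 3).mul hu''2)
    ((eventually_ge_atTop 0).mono fun t ht => by positivity) (hint.smul c⁻¹) ?_
  filter_upwards [hweight] with t ht
  simp only [Pi.smul_apply, smul_eq_mul]
  rw [le_inv_mul_iff₀ hc, ← mul_assoc]
  gcongr

lemma integrableAtFilter_mul_norm_deriv_deriv_sq (hu : IsDampedWave Γ B u u' u'')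
    (hB : IsCoerciveSymmetric B c) (hΓ : IsNonnegSymmetric Γ) :
    IntegrableAtFilter (fun t => t * ‖u'' t‖ ^ 2) atTop := by
  refine integrableAtFilter_atTop_of_le
    (continuousOn_id.mul (hu.continuousOn_deriv_deriv.norm.pow 2))
    ((eventually_ge_atTop 0).mono fun t ht => by positivity)
    (hu.integrableAtFilter_pow_three_mul_norm_deriv_deriv_sq hB hΓ) ?_
  filter_upwards [eventually_ge_atTop 1] with t ht
  gcongr
  exact le_self_pow₀ ht three_ne_zero

variable [CompleteSpace H]

theorem tendsto_zero (hu : IsDampedWave Γ B u u' u'') (hB : IsCoerciveSymmetric B c)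
    (hΓ : IsNonnegSymmetric Γ) (hclosed : IsClosed (Γ : Set (H × H)))
    (hdense : Dense (Prod.snd '' (Γ : Set (H × H)))) : Tendsto u atTop (𝓝 0) := by
  obtain ⟨U, -, hU⟩ := hu.toIsForcedHeat.exists_primitive hclosed
    (G := fun t => B (u 0) + u' 0 - u' t) (continuousOn_const.sub hu.continuousOn_deriv)
    (fun t ht => (hu.hasDerivAt_deriv t ht).const_sub _) (add_sub_cancel_right _ _)
  have hforcing := (hu.tendsto_deriv_zero hB hΓ).const_sub (B (u 0) + u' 0)
  refine hU.tendsto_deriv_zero hu.toIsForcedHeat hB hΓ hdense hforcing ?_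
  simpa only [norm_neg] using hu.integrableAtFilter_mul_norm_deriv_deriv_sq hB hΓ

theorem tendsto_mul_norm_sub_zero (hu : IsDampedWave Γ B u u' u'') {f f' : ℝ → H}
    (hf : IsForcedHeat Γ B (fun _ => 0) f f') (hB : IsCoerciveSymmetric B c)
    (hΓ : IsNonnegSymmetric Γ) (hclosed : IsClosed (Γ : Set (H × H)))
    (hdense : Dense (Prod.snd '' (Γ : Set (H × H)))) (h0 : B (f 0) = B (u 0) + u' 0) :
    Tendsto (fun t => t * ‖u t - f t‖) atTop (𝓝 0) := by
  have he := hu.toIsForcedHeat.sub hf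
  obtain ⟨E₁, hE₁0, hE₁⟩ := he.exists_primitive hclosed (G := fun t => -u' t)
    hu.continuousOn_deriv.neg
    (fun t ht => (hu.hasDerivAt_deriv t ht).neg.congr_deriv (sub_zero _).symm)
    (by rw [map_sub, h0]; abel)
  obtain ⟨E₂, -, hE₂⟩ := hE₁.exists_primitive hclosed (G := fun t => u 0 - u t)
    (continuousOn_const.sub hu.continuousOn) (fun t ht => (hu.hasDerivAt t ht).const_sub _)
    (by rw [hE₁0, map_zero, sub_self])
  have hforcing := (hu.tendsto_zero hB hΓ hclosed hdense).const_sub (u 0)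
  have hu'int : IntegrableAtFilter (fun t => t * ‖-u' t‖ ^ 2) atTop := by
    simpa only [norm_neg] using hu.integrableAtFilter_mul_norm_deriv_sq hB hΓ
  have hu''int : IntegrableAtFilter (fun t => t ^ 3 * ‖-u'' t - 0‖ ^ 2) atTop := by
    simpa only [sub_zero, norm_neg] using
      hu.integrableAtFilter_pow_three_mul_norm_deriv_deriv_sq hB hΓ
  have hE₁lim := hE₂.tendsto_deriv_zero hE₁ hB hΓ hdense hforcing hu'int
  exact hE₁.tendsto_mul_norm_deriv_zero he hB hΓ hE₁lim hu'int hu''int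

end IsDampedWave

end Relations

/-! ### Operators on a complex Hilbert space -/

section Complex

attribute [local instance] InnerProductSpace.complexToReal

variable {H : Type*} [NormedAddCommGroup H] [InnerProductSpace ℂ H]

lemma isNonnegSymmetric_graph {A : H →ₗ.[ℂ] H} (hsymm : A.IsFormalAdjoint A)
    (hnonneg : ∀ x : A.domain, 0 ≤ (⟪A x, (x : H)⟫_ℂ).re) :
    IsNonnegSymmetric (A.graph.restrictScalars ℝ) where
  symm := by
    rintro ⟨_, _⟩ hp ⟨_, _⟩ hq
    obtain ⟨x, rfl, rfl⟩ := A.mem_graph_iff.1 hp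
    obtain ⟨y, rfl, rfl⟩ := A.mem_graph_iff.1 hq
    exact congrArg Complex.re (hsymm x y)
  nonneg := by
    rintro ⟨_, _⟩ hp
    obtain ⟨x, rfl, rfl⟩ := A.mem_graph_iff.1 hp
    exact hnonneg x

lemma isCoerciveSymmetric_restrictScalars {B : H →L[ℂ] H} {c : ℝ} (hc : 0 < c)
    (hsymm : (B : H →ₗ[ℂ] H).IsSymmetric) (hle : ∀ x, c * ‖x‖ ^ 2 ≤ (⟪B x, x⟫_ℂ).re) :
    IsCoerciveSymmetric (B.restrictScalars ℝ) c where
  pos := hc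
  symm x y := congrArg Complex.re (hsymm x y)
  le_inner := hle

lemma re_inner_nonneg_of_pos {A : H →ₗ.[ℂ] H}
    (hpos : ∀ x : A.domain, x ≠ 0 → 0 < (⟪A x, (x : H)⟫_ℂ).re) (x : A.domain) :
    0 ≤ (⟪A x, (x : H)⟫_ℂ).re := by
  obtain rfl | hx := eq_or_ne x 0
  · simp
  · exact (hpos x hx).le

lemma eq_zero_of_map_eq_zero_of_pos {A : H →ₗ.[ℂ] H}
    (hpos : ∀ x : A.domain, x ≠ 0 → 0 < (⟪A x, (x : H)⟫_ℂ).re) (x : A.domain) (hx : A x = 0) :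
    x = 0 := by
  by_contra hne
  simpa [hx] using hpos x hne

lemma dense_snd_image_graph {A : H →ₗ.[ℂ] H} (hA : DenseRange A) :
    Dense (Prod.snd '' (A.graph.restrictScalars ℝ : Set (H × H))) :=
  hA.mono <| by
    rintro _ ⟨x, rfl⟩
    exact ⟨(x, A x), A.mem_graph x, rfl⟩

variable [CompleteSpace H]

lemma isFormalAdjoint_of_isSelfAdjoint {A : H →ₗ.[ℂ] H} (hA : IsSelfAdjoint A) :
    A.IsFormalAdjoint A := by
  simpa only [LinearPMap.isSelfAdjoint_def.1 hA] using
    LinearPMap.adjoint_isFormalAdjoint hA.dense_domain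

lemma denseRange_of_isSelfAdjoint {A : H →ₗ.[ℂ] H} (hA : IsSelfAdjoint A)
    (hker : ∀ x : A.domain, A x = 0 → x = 0) : DenseRange A := by
  have hadj := LinearPMap.isSelfAdjoint_def.1 hA
  suffices (LinearMap.range A.toFun).topologicalClosure = ⊤ from
    Submodule.dense_iff_topologicalClosure_eq_top.2 this
  rw [Submodule.topologicalClosure_eq_top_iff, Submodule.eq_bot_iff]
  intro y hy
  have hinner : ∀ x : A.domain, ⟪(0 : H), (x : H)⟫_ℂ = ⟪y, A x⟫_ℂ := fun x => by
    rw [inner_zero_left]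
    exact ((Submodule.mem_orthogonal' _ y).1 hy _ ⟨x, rfl⟩).symm
  have hmem : y ∈ A.adjoint.domain := LinearPMap.mem_adjoint_domain_of_exists y ⟨0, hinner⟩
  have hzero : A.adjoint ⟨y, hmem⟩ = 0 := LinearPMap.adjoint_apply_eq hA.dense_domain _ hinner
  rw [← hadj] at hker
  exact congrArg Subtype.val (hker ⟨y, hmem⟩ hzero)

lemma DampedWaveSolution.isDampedWave {A : H →ₗ.[ℂ] H} {B : H →L[ℂ] H}
    (sol : DampedWaveSolution A B) :
    IsDampedWave (A.graph.restrictScalars ℝ) (B.restrictScalars ℝ) sol.u sol.du sol.ddu where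
  continuousOn_forcing := sol.cont_ddu.neg
  continuousOn t ht := (sol.hdu t ht).continuousWithinAt
  continuousOn_deriv t ht := (sol.hddu t ht).continuousWithinAt
  hasDerivAt t ht := (sol.hdu t (le_of_lt ht)).hasDerivAt (Ici_mem_nhds ht)
  hasDerivAt_deriv t ht := (sol.hddu t (le_of_lt ht)).hasDerivAt (Ici_mem_nhds ht)
  mem t ht := by
    refine A.mem_graph_iff.2 ⟨⟨sol.u t, sol.mem t ht⟩, rfl, ?_⟩
    rw [sol.hAu t ht, ContinuousLinearMap.coe_restrictScalars', eq_sub_iff_add_eq,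
      eq_neg_iff_add_eq_zero, ← sol.eqn t ht]
    abel

lemma HeatSolution.isForcedHeat {A : H →ₗ.[ℂ] H} {B Bh Binvh : H →L[ℂ] H}
    (hsq : Bh ∘L Bh = B) (hinv : Bh ∘L Binvh = ContinuousLinearMap.id ℂ H)
    (sol : HeatSolution A Binvh) :
    IsForcedHeat (A.graph.restrictScalars ℝ) (B.restrictScalars ℝ) (fun _ => 0)
      (fun t => Binvh (sol.v t)) (fun t => Binvh (sol.dv t)) where
  continuousOn_forcing := continuousOn_const
  continuousOn :=
    Binvh.continuous.comp_continuousOn fun t ht => (sol.hdv t ht).continuousWithinAt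
  continuousOn_deriv := Binvh.continuous.comp_continuousOn sol.cont_dv
  hasDerivAt t ht := (Binvh.restrictScalars ℝ).hasFDerivAt.comp_hasDerivAt t
    ((sol.hdv t (le_of_lt ht)).hasDerivAt (Ici_mem_nhds ht))
  mem t ht := by
    have hcancel (x : H) : Bh (Binvh x) = x := DFunLike.congr_fun hinv x
    have heqn := congrArg Bh (sol.eqn t ht)
    rw [map_add, hcancel, map_zero] at heqn
    refine A.mem_graph_iff.2 ⟨⟨_, sol.mem t ht⟩, rfl, ?_⟩
    rw [← hsq, ContinuousLinearMap.coe_restrictScalars', ContinuousLinearMap.comp_apply, hcancel,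
      zero_sub]
    exact eq_neg_of_add_eq_zero_right heqn

theorem stmt6_general (A : H →ₗ.[ℂ] H) (hA_closed : A.IsClosed) (hA_symm : A.IsFormalAdjoint A)
    (hA_nonneg : ∀ x : A.domain, 0 ≤ (⟪A x, (x : H)⟫_ℂ).re) (hA_dense : DenseRange A)
    (B : H →L[ℂ] H) (hB_sa : IsSelfAdjoint B) (c : ℝ) (hc : 0 < c)
    (hB_pos : ∀ x : H, c * ‖x‖ ^ 2 ≤ (⟪B x, x⟫_ℂ).re) (Bh Binvh : H →L[ℂ] H)
    (hsq : Bh ∘L Bh = B) (hinv : Bh ∘L Binvh = ContinuousLinearMap.id ℂ H)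
    (sol : DampedWaveSolution A B) (hs : HeatSolution A Binvh)
    (h0 : hs.v 0 = Bh (sol.u 0) + Binvh (sol.du 0)) :
    Tendsto (fun t : ℝ => t * ‖sol.u t - Binvh (hs.v t)‖) atTop (𝓝 0) := by
  have hcancel (x : H) : Bh (Binvh x) = x := DFunLike.congr_fun hinv x
  have hinit : B (Binvh (hs.v 0)) = B (sol.u 0) + sol.du 0 := by
    simp only [← hsq, ContinuousLinearMap.comp_apply, hcancel, h0, map_add]
  exact sol.isDampedWave.tendsto_mul_norm_sub_zero (hs.isForcedHeat hsq hinv)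
    (isCoerciveSymmetric_restrictScalars hc
      (ContinuousLinearMap.isSelfAdjoint_iff_isSymmetric.1 hB_sa) hB_pos)
    (isNonnegSymmetric_graph hA_symm hA_nonneg) hA_closed (dense_snd_image_graph hA_dense) hinit

end Complex

/-- for each individual solution, `t·‖u(t) − B^{-1/2}v(t)‖ → 0`. -/
theorem stmt6
    {H : Type*} [NormedAddCommGroup H] [InnerProductSpace ℂ H] [CompleteSpace H]
    (A : H →ₗ.[ℂ] H) (hA_sa : IsSelfAdjoint A)
    (hA_pos : ∀ u : A.domain, u ≠ 0 → 0 < (⟪A u, (u : H)⟫).re)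
    (B : H →L[ℂ] H) (hB_sa : IsSelfAdjoint B)
    (c : ℝ) (hc : 0 < c)
    (hB_pos : ∀ u : H, c * ‖u‖ ^ 2 ≤ (⟪B u, u⟫).re)
    -- `Bh` is the positive square root `B^{1/2}` of `B`, `Binvh` its inverse `B^{-1/2}`
    (Bh Binvh : H →L[ℂ] H)
    (hBh_sq : Bh ∘L Bh = B) (hBh_sa : IsSelfAdjoint Bh)
    (hBh_pos : ∀ u : H, 0 ≤ (⟪Bh u, u⟫).re)
    (hBinv₁ : Binvh ∘L Bh = ContinuousLinearMap.id ℂ H)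
    (hBinv₂ : Bh ∘L Binvh = ContinuousLinearMap.id ℂ H)
    -- `B^{±1/2}` map `D(A)` into `D(A)` with the stated bounds
    (hBhD : ∀ u : A.domain, Bh (u : H) ∈ A.domain)
    (hBinvD : ∀ u : A.domain, Binvh (u : H) ∈ A.domain)
    (C₀ : ℝ) (hC₀ : 0 < C₀)
    (hBhA : ∀ u : A.domain, ‖A ⟨Bh (u : H), hBhD u⟩‖ ≤ C₀ * (‖(u : H)‖ + ‖A u‖))
    (hBinvA : ∀ u : A.domain, ‖A ⟨Binvh (u : H), hBinvD u⟩‖ ≤ C₀ * (‖(u : H)‖ + ‖A u‖)) :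
    ∀ (sol : DampedWaveSolution A B) (hs : HeatSolution A Binvh),
      hs.v 0 = Bh (sol.u 0) + Binvh (sol.du 0) →
      Filter.Tendsto (fun t : ℝ => t * ‖sol.u t - Binvh (hs.v t)‖)
        Filter.atTop (nhds 0) := by
  exact stmt6_general A hA_sa.isClosed (isFormalAdjoint_of_isSelfAdjoint hA_sa)
    (re_inner_nonneg_of_pos hA_pos)
    (denseRange_of_isSelfAdjoint hA_sa (eq_zero_of_map_eq_zero_of_pos hA_pos))
    B hB_sa c hc hB_pos Bh Binvh hBh_sq hBinv₂
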